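/- Let R be a commutative ring, σ a type, t : σ → R, and let P₁ be the Peiffer ideal of the pre-crossed module (R⁺[σ], R, ∂), i.e. the R-submodule of R⁺[σ] generated by the elements p * q − C(aeval t p) * q for p, q ∈ R⁺[σ]. Then the quotient R⁺[σ]/P₁ with the induced boundary ∂̄ : R⁺[σ]/P₁ → R is the free crossed module on t: for every crossed module δ : C → R and every function ν : σ → C with δ(ν i) = t i for all i ∈ σ, there exists a unique map φ : R⁺[σ]/P₁ → C that is additive, multiplicative, and R-linear, satisfies φ(X i + P₁) = ν i for all i ∈ σ, and satisfies δ ∘ φ = ∂̄. -/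

import Mathlib

/-!
`R⁺[σ]` is the free non-unital commutative `R`-algebra on `σ`: a map `ν : σ → A` extends to an
algebra map from the polynomials to the unitization `R ⊕ A`, and this map has first component the
constant coefficient, so it carries the augmentation ideal into `A`. For a crossed module
`δ : C → R`, freeness also identifies `δ ∘ lift ν` with `∂`, as both send `X i` to `t i`; the
Peiffer identity (CM2) in `C` then says that `lift ν` vanishes on Peiffer elements.
-/

open MvPolynomial

/-- The augmentation ideal `R⁺[σ]` of the polynomial algebra `MvPolynomial σ R`,
i.e. the kernel of the constant-coefficient map. -/
noncomputable def aug (R : Type*) [CommRing R] (σ : Type*) : Ideal (MvPolynomial σ R) :=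
  RingHom.ker (constantCoeff : MvPolynomial σ R →+* R)

/-- The augmentation ideal is closed under multiplication. -/
noncomputable instance {R : Type*} [CommRing R] {σ : Type*} : Mul (aug R σ) :=
  ⟨fun a b => ⟨a.1 * b.1, Ideal.mul_mem_left _ _ b.2⟩⟩

/-- The variable `X i` as an element of the augmentation ideal. -/
noncomputable def XinAug {R : Type*} [CommRing R] {σ : Type*} (i : σ) : aug R σ :=
  ⟨X i, by simp [aug, RingHom.mem_ker]⟩

/-- The Peiffer ideal `P₁` of the pre-crossed module `∂ : R⁺[σ] → R` (with `∂` the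
restriction of `aeval t`): the `R`-submodule of `R⁺[σ]` generated by the Peiffer elements
`p * q - C (aeval t p) * q` for `p, q ∈ R⁺[σ]`.  (Here `r • q = C r * q`.) -/
noncomputable def peifferIdeal {R : Type*} [CommRing R] {σ : Type*} (t : σ → R) :
    Submodule R (aug R σ) :=
  Submodule.span R
    {z : aug R σ | ∃ p q : aug R σ, z = p * q - (aeval t (p : MvPolynomial σ R)) • q}

theorem fst_aeval_inr {R σ A : Type*} [CommSemiring R] [NonUnitalCommSemiring A] [Module R A]
    [IsScalarTower R A A] [SMulCommClass R A A] (ν : σ → A) (p : MvPolynomial σ R) :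
    (aeval (fun i ↦ (Unitization.inr (ν i) : Unitization R A)) p).fst = constantCoeff p := by
  simpa using comp_aeval_apply (fun i ↦ (Unitization.inr (ν i) : Unitization R A))
    (Unitization.fstHom R A) p

namespace aug

variable {R σ : Type*} [CommRing R]

theorem constantCoeff_coe (p : aug R σ) : constantCoeff (p : MvPolynomial σ R) = 0 :=
  p.2

@[simp]
theorem coe_mul (p q : aug R σ) : ((p * q : aug R σ) : MvPolynomial σ R) = p * q :=
  rfl

@[simp]
theorem coe_XinAug (i : σ) : ((XinAug i : aug R σ) : MvPolynomial σ R) = X i :=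
  rfl

noncomputable instance : NonUnitalCommRing (aug R σ) where
  left_distrib _ _ _ := Subtype.ext (mul_add _ _ _)
  right_distrib _ _ _ := Subtype.ext (add_mul _ _ _)
  zero_mul _ := Subtype.ext (zero_mul _)
  mul_zero _ := Subtype.ext (mul_zero _)
  mul_assoc _ _ _ := Subtype.ext (mul_assoc _ _ _)
  mul_comm _ _ := Subtype.ext (mul_comm _ _)

/-- The `R`-linear projection of `MvPolynomial σ R` onto its augmentation ideal along the
constants. -/
noncomputable def proj : MvPolynomial σ R →ₗ[R] aug R σ where
  toFun p := ⟨p - C (constantCoeff p), by simp [aug, RingHom.mem_ker]⟩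
  map_add' p q := Subtype.ext <| by simp [add_sub_add_comm]
  map_smul' r p := Subtype.ext <| by simp [smul_eq_C_mul, mul_sub]

@[simp]
theorem coe_proj (p : MvPolynomial σ R) :
    (proj p : MvPolynomial σ R) = p - C (constantCoeff p) :=
  rfl

@[simp]
theorem proj_coe (p : aug R σ) : proj (p : MvPolynomial σ R) = p :=
  Subtype.ext <| by simp [constantCoeff_coe]

@[simp]
theorem proj_C (r : R) : proj (C r : MvPolynomial σ R) = 0 :=
  Subtype.ext <| by simp

theorem proj_mul_X (p : MvPolynomial σ R) (i : σ) :
    proj (p * X i) = proj p * XinAug i + constantCoeff p • XinAug i :=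
  Subtype.ext <| by simp [smul_eq_C_mul, sub_mul]

theorem hom_ext {A : Type*} [NonUnitalNonAssocSemiring A] [DistribMulAction R A]
    {f g : aug R σ →ₙₐ[R] A} (h : ∀ i, f (XinAug i) = g (XinAug i)) : f = g := by
  have eq_on_proj (p : MvPolynomial σ R) : f (proj p) = g (proj p) := by
    induction p using MvPolynomial.induction_on with
    | C r => simp
    | add p q hp hq => simp [hp, hq]
    | mul_X p i hp => simp [proj_mul_X, hp, h]
  ext p
  simpa using eq_on_proj p

section Lift

variable {A : Type*} [NonUnitalCommSemiring A] [Module R A] [IsScalarTower R A A]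
  [SMulCommClass R A A]

/-- The extension of `ν : σ → A` to `R⁺[σ]`, exhibiting `R⁺[σ]` as the free non-unital commutative
`R`-algebra on `σ`. It is the second component of evaluation in the unitization of `A`. -/
noncomputable def lift (ν : σ → A) : aug R σ →ₙₐ[R] A where
  toFun p := (aeval (fun i ↦ (Unitization.inr (ν i) : Unitization R A)) p.1).snd
  map_zero' := by simp
  map_add' := by simp
  map_smul' := by simp
  map_mul' p q := by simp [fst_aeval_inr, constantCoeff_coe]

@[simp]
theorem lift_XinAug (ν : σ → A) (i : σ) : lift ν (XinAug i : aug R σ) = ν i := by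
  simp [lift]

end Lift

/-- The boundary `∂ : R⁺[σ] → R` of the pre-crossed module, the restriction of `aeval t`. -/
noncomputable def boundary (t : σ → R) : aug R σ →ₙₐ[R] R where
  toFun p := aeval t (p : MvPolynomial σ R)
  map_zero' := by simp
  map_add' := by simp
  map_smul' := by simp
  map_mul' := by simp

@[simp]
theorem boundary_apply (t : σ → R) (p : aug R σ) :
    boundary t p = aeval t (p : MvPolynomial σ R) :=
  rfl

theorem comp_lift_eq_boundary {A : Type*} [NonUnitalCommSemiring A] [Module R A]
    [IsScalarTower R A A] [SMulCommClass R A A] (δ : A →ₙₐ[R] R) {ν : σ → A} {t : σ → R}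
    (h : ∀ i, δ (ν i) = t i) : δ.comp (lift ν) = boundary t :=
  hom_ext fun i ↦ by simp [h]

end aug

theorem peifferIdeal_le_ker {R σ A : Type*} [CommRing R] [NonUnitalNonAssocRing A] [Module R A]
    {t : σ → R} {δ : A →ₙₐ[R] R} {f : aug R σ →ₙₐ[R] A}
    (peiffer : ∀ a b, δ a • b = a * b) (hf : δ.comp f = aug.boundary t) :
    peifferIdeal t ≤ LinearMap.ker (f : aug R σ →ₗ[R] A) := by
  refine Submodule.span_le.mpr ?_
  rintro _ ⟨p, q, rfl⟩
  have hp : δ (f p) = aeval t (p : MvPolynomial σ R) := DFunLike.congr_fun hf p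
  simp [← hp, peiffer]

/-- The quotient `R⁺[σ]/P₁` of the augmentation ideal by the Peiffer ideal,
with the induced boundary `∂̄`, is the *free crossed module* on `t : σ → R`:
for every crossed module `δ : C → R` and every `ν : σ → C` with `δ (ν i) = t i`,
there is a unique additive, multiplicative, `R`-linear map `φ : R⁺[σ]/P₁ → C` with
`φ (X i + P₁) = ν i` and `δ ∘ φ = ∂̄`. -/
theorem augQuotient_free_crossedModule
    {R : Type*} [CommRing R] {σ : Type*} (t : σ → R)
    {C : Type*} [NonUnitalCommRing C] [Module R C]
    (hact : ∀ (r : R) (c c' : C), r • (c * c') = (r • c) * c')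
    (δ : C → R)
    (hadd : ∀ c c' : C, δ (c + c') = δ c + δ c')
    (hmul : ∀ c c' : C, δ (c * c') = δ c * δ c')
    (hCM1 : ∀ (r : R) (c : C), δ (r • c) = r * δ c)
    (hCM2 : ∀ c c' : C, δ c • c' = c * c')
    (ν : σ → C) (hν : ∀ i : σ, δ (ν i) = t i) :
    ∃! φ : (aug R σ ⧸ peifferIdeal t) → C,
      (∀ a b : aug R σ ⧸ peifferIdeal t, φ (a + b) = φ a + φ b) ∧
      (∀ p q : aug R σ, φ (Submodule.Quotient.mk (p * q))
          = φ (Submodule.Quotient.mk p) * φ (Submodule.Quotient.mk q)) ∧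
      (∀ (r : R) (a : aug R σ ⧸ peifferIdeal t), φ (r • a) = r • φ a) ∧
      (∀ i : σ, φ (Submodule.Quotient.mk (XinAug i)) = ν i) ∧
      (∀ p : aug R σ, δ (φ (Submodule.Quotient.mk p)) = aeval t (p : MvPolynomial σ R)) := by
  have : IsScalarTower R C C := ⟨fun r c c' ↦ (hact r c c').symm⟩
  have : SMulCommClass R C C := ⟨fun r c c' ↦ by simp only [smul_eq_mul, mul_comm c, hact]⟩
  let d : C →ₙₐ[R] R :=
    { toFun := δ
      map_smul' := hCM1
      map_zero' := by simpa using hCM1 0 0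
      map_add' := hadd
      map_mul' := hmul }
  have hd : d.comp (aug.lift ν) = aug.boundary t := aug.comp_lift_eq_boundary d hν
  let φ : (aug R σ ⧸ peifferIdeal t) →ₗ[R] C :=
    (peifferIdeal t).liftQ _ (peifferIdeal_le_ker hCM2 hd)
  refine ⟨φ, ⟨map_add φ, map_mul (aug.lift ν), map_smul φ, aug.lift_XinAug ν,
    DFunLike.congr_fun hd⟩, ?_⟩
  rintro ψ ⟨ψ_add, ψ_mul, ψ_smul, ψ_X, -⟩
  let f : aug R σ →ₙₐ[R] C :=
    { toFun p := ψ (Submodule.Quotient.mk p)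
      map_smul' r p := ψ_smul r (Submodule.Quotient.mk p)
      map_zero' := by simpa using ψ_smul 0 0
      map_add' p q := ψ_add (Submodule.Quotient.mk p) (Submodule.Quotient.mk q)
      map_mul' := ψ_mul }
  have hf : f = aug.lift ν := aug.hom_ext fun i ↦ (ψ_X i).trans (aug.lift_XinAug ν i).symm
  funext a
  obtain ⟨p, rfl⟩ := Submodule.Quotient.mk_surjective _ a
  exact DFunLike.congr_fun hf p
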